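/- Fix integers d ≥ 1, r ≥ 0 and a strict partition λ with d parts such that λ_i ≤ r + 2d − 2i + 1 for all i. Let a = (a_1, …, a_ℓ) ∈ Red(w^{(d,r)}) with reflection order ro(a) = (γ_1, …, γ_ℓ), and let B_a be the balanced shifted tableau of shape Z(d,r) defined by B_a(x) = the unique t with γ_t = f(x). Then B_a ∈ BS(Z(d,r))|_λ if and only if (a_{N+1}, a_{N+2}, …, a_ℓ) = a^λ. -/

import Mathlib

open scoped BigOperators

namespace BST

/-- `lam` (1-indexed, with `d` parts) is a strict partition: strictly decreasing
positive parts `lam 1 > lam 2 > ⋯ > lam d > 0`. -/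
def IsStrictPartition (d : ℕ) (lam : ℕ → ℕ) : Prop :=
  (∀ i : ℕ, 1 ≤ i → i < d → lam (i + 1) < lam i) ∧ 1 ≤ lam d

/-- The size `|λ| = λ_1 + ⋯ + λ_d`. -/
def sizeP (d : ℕ) (lam : ℕ → ℕ) : ℕ := ∑ i ∈ Finset.Icc 1 d, lam i

/-- The shifted diagram `D(λ) ⊆ ℤ × ℤ`: row `i` (1 ≤ i ≤ d) occupies columns
`i - d, …, λ_i + i - d - 1`. -/
def Diagram (d : ℕ) (lam : ℕ → ℕ) : Set (ℤ × ℤ) :=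
  {p : ℤ × ℤ | 1 ≤ p.1 ∧ p.1 ≤ (d : ℤ) ∧ p.1 - (d : ℤ) ≤ p.2 ∧
    p.2 + (d : ℤ) + 1 ≤ (lam p.1.toNat : ℤ) + p.1}

/-- The hook `H(i,c)`. -/
def Hook (d : ℕ) (lam : ℕ → ℕ) (i c : ℤ) : Set (ℤ × ℤ) :=
  {(i, c)} ∪ {p ∈ Diagram d lam | (p.1 = i ∧ c < p.2) ∨ (p.2 = c ∧ i < p.1)} ∪
    {p ∈ Diagram d lam | c < 0 ∧ p.1 = (d : ℤ) + 1 + c}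

/-- The extended hook `H̃(i,c)`. -/
def ExtHook (d : ℕ) (lam : ℕ → ℕ) (i c : ℤ) : Set (ℤ × ℤ) :=
  Hook d lam i c ∪ {p : ℤ × ℤ | c < 0 ∧ p = ((d : ℤ) + 1 + c, c)}

/-- The extended diagram `D(λ) ∪ {(i, i - d - 1) : 1 ≤ i ≤ d}`. -/
def ExtDiagram (d : ℕ) (lam : ℕ → ℕ) : Set (ℤ × ℤ) :=
  Diagram d lam ∪ {p : ℤ × ℤ | 1 ≤ p.1 ∧ p.1 ≤ (d : ℤ) ∧ p.2 = p.1 - ((d : ℤ) + 1)}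

/-- The extended filling `B̃`, with `B̃(i, i - d - 1) = B(i, 0)`. -/
def ExtFilling (d : ℕ) (B : ℤ × ℤ → ℕ) : ℤ × ℤ → ℕ :=
  fun p => if p.2 = p.1 - ((d : ℤ) + 1) then B (p.1, 0) else B p

/-- The rank function `rk(i,c)`. -/
def rk (d : ℕ) (lam : ℕ → ℕ) (i c : ℤ) : ℤ :=
  if 0 ≤ c then (lam i.toNat : ℤ) - d + i - c
  else (lam i.toNat : ℤ) - d + i + (lam ((d : ℤ) + 1 + c).toNat : ℤ) + c + 1

/-- A bijective filling of `D(λ)` with `1, …, |λ|` (normalized to be `0` off the diagram). -/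
def IsFilling (d : ℕ) (lam : ℕ → ℕ) (B : ℤ × ℤ → ℕ) : Prop :=
  Set.BijOn B (Diagram d lam) (Set.Icc 1 (sizeP d lam)) ∧
    ∀ p : ℤ × ℤ, p ∉ Diagram d lam → B p = 0

/-- A balanced shifted tableau: a bijective filling such that at each box `(i,c)`,
`B(i,c)` is the `rk(i,c)`-th largest entry of the multiset of values of `B̃` on the
extended hook, i.e. exactly `rk(i,c) - 1` boxes of the extended hook carry a value
strictly larger than `B(i,c)`. -/
def IsBalanced (d : ℕ) (lam : ℕ → ℕ) (B : ℤ × ℤ → ℕ) : Prop :=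
  IsFilling d lam B ∧ ∀ p ∈ Diagram d lam,
    ({q ∈ ExtHook d lam p.1 p.2 | B p < ExtFilling d B q}.ncard : ℤ) =
      rk d lam p.1 p.2 - 1

/-- A standard Young tableau of shifted shape `λ`. -/
def IsSYT (d : ℕ) (lam : ℕ → ℕ) (B : ℤ × ℤ → ℕ) : Prop :=
  IsFilling d lam B ∧ ∀ p ∈ Diagram d lam, ∀ q ∈ Diagram d lam,
    ((p.1 = q.1 ∧ p.2 < q.2) → B p < B q) ∧ ((p.2 = q.2 ∧ p.1 < q.1) → B p < B q)

/-- The simple reflections of `W(B_n)`, acting on `ℤ`: `s 0` swaps `1 ↔ -1`,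
and `s a` (for `a ≥ 1`) swaps `a ↔ a+1` and `-a ↔ -(a+1)`. -/
def sB (a : ℕ) : Equiv.Perm ℤ :=
  if a = 0 then Equiv.swap 1 (-1)
  else Equiv.swap (a : ℤ) ((a : ℤ) + 1) * Equiv.swap (-(a : ℤ)) (-(a : ℤ) - 1)

/-- The product `s_{a_1} s_{a_2} ⋯ s_{a_m}` of a word. -/
def wordProd (L : List ℕ) : Equiv.Perm ℤ := (L.map sB).prod

/-- A signed permutation in `W(B_n)`: odd, and the identity beyond `n`. -/
def IsSignedPerm (n : ℕ) (w : Equiv.Perm ℤ) : Prop :=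
  (∀ i : ℤ, w (-i) = -(w i)) ∧ ∀ i : ℤ, (n : ℤ) < |i| → w i = i

/-- The Coxeter length of `w` in `W(B_n)`. -/
noncomputable def lengthB (n : ℕ) (w : Equiv.Perm ℤ) : ℕ :=
  sInf {m : ℕ | ∃ L : List ℕ, (∀ a ∈ L, a < n) ∧ wordProd L = w ∧ L.length = m}

/-- `L` is a reduced word of `w` in `W(B_n)`. -/
def IsReducedWord (n : ℕ) (w : Equiv.Perm ℤ) (L : List ℕ) : Prop :=
  (∀ a ∈ L, a < n) ∧ wordProd L = w ∧ L.length = lengthB n w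

/-- The vector `e_k` (for `k ≥ 1` the `k`-th standard basis vector, with the
conventions `e 0 = 0` and `e (-k) = - e k`), represented as an odd function `ℤ → ℤ`. -/
def eVec (k : ℤ) : ℤ → ℤ :=
  fun t => if t = 0 then 0 else if t = k then 1 else if t = -k then -1 else 0

/-- The positive roots of type `B_n`. -/
def PosRoots (n : ℕ) : Set (ℤ → ℤ) :=
  {v | (∃ i j : ℤ, 1 ≤ i ∧ i < j ∧ j ≤ (n : ℤ) ∧
        (v = eVec j - eVec i ∨ v = eVec j + eVec i)) ∨
       (∃ i : ℤ, 1 ≤ i ∧ i ≤ (n : ℤ) ∧ v = eVec i)}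

/-- The action of a signed permutation on vectors: `w · e_i = e_{w(i)}`. -/
def actB (w : Equiv.Perm ℤ) (v : ℤ → ℤ) : ℤ → ℤ := fun t => v (w⁻¹ t)

/-- The inversion set `Inv(w) = {α ∈ Φ⁺ : w⁻¹ · α ∈ -Φ⁺}`. -/
def InvSet (n : ℕ) (w : Equiv.Perm ℤ) : Set (ℤ → ℤ) :=
  {α | α ∈ PosRoots n ∧ -(actB w⁻¹ α) ∈ PosRoots n}

/-- The simple roots: `α_0 = e_1` and `α_a = e_{a+1} - e_a` for `a ≥ 1`. -/
def alphaRoot (a : ℕ) : ℤ → ℤ :=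
  if a = 0 then eVec 1 else eVec ((a : ℤ) + 1) - eVec (a : ℤ)

/-- The reflection order of a word: `reflOrder L t = γ_{t+1} = s_{a_1} ⋯ s_{a_t} · α_{a_{t+1}}`
(0-indexed). -/
def reflOrder (L : List ℕ) (t : ℕ) : ℤ → ℤ :=
  actB (wordProd (L.take t)) (alphaRoot (L.getD t 0))

/-- The trapezoid `Z(d,r) = (r+2d-1, r+2d-3, …, r+1)`. -/
def Zlam (d r : ℕ) : ℕ → ℕ := fun i => r + 2 * d + 1 - 2 * i

/-- The labeling `f : D(Z(d,r)) → Φ⁺`. -/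
def fLabel (d r : ℕ) (p : ℤ × ℤ) : ℤ → ℤ :=
  if p.2 ≤ 0 then eVec ((d : ℤ) + 1 - p.1) - eVec p.2
  else if p.2 ≤ (r : ℤ) then eVec ((d : ℤ) + 1 - p.1) + eVec (p.2 + (d : ℤ))
  else eVec ((d : ℤ) + 1 - p.1) - eVec (p.2 - (r : ℤ))

/-- The extended labeling `f̃`, with `f̃(i, i - d - 1) = 2 e_{d+1-i}`. -/
def fExtLabel (d r : ℕ) (p : ℤ × ℤ) : ℤ → ℤ :=
  if p.2 = p.1 - ((d : ℤ) + 1) then (2 : ℤ) • eVec ((d : ℤ) + 1 - p.1)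
  else fLabel d r p

/-- `w` is the signed permutation `w^{(d,r)} ∈ W(B_{d+r})`, i.e.
`w(i) = d + i` for `1 ≤ i ≤ r` and `w(i) = -(i - r)` for `r < i ≤ d + r`. -/
def IsWdr (d r : ℕ) (w : Equiv.Perm ℤ) : Prop :=
  IsSignedPerm (d + r) w ∧
    (∀ i : ℤ, 1 ≤ i → i ≤ (r : ℤ) → w i = (d : ℤ) + i) ∧
    (∀ i : ℤ, (r : ℤ) < i → i ≤ (d : ℤ) + (r : ℤ) → w i = -(i - r))


/-- `x` lies strictly between `y` and `z` (i.e. `min(y,z) < x < max(y,z)`). -/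
def Between (x y z : ℕ) : Prop := (y < x ∧ x < z) ∨ (z < x ∧ x < y)

/-- A nonempty list is unimodal: strictly decreasing down to its minimum
(at 0-indexed position `k`), then strictly increasing. -/
def Unimodal (L : List ℕ) : Prop :=
  ∃ k : ℕ, k < L.length ∧
    (∀ a b : ℕ, a < b → b ≤ k → L.getD b 0 < L.getD a 0) ∧
    (∀ a b : ℕ, k ≤ a → a < b → b < L.length → L.getD a 0 < L.getD b 0)

/-- Row `i` of the distinguished tableau of shape `Z(d,r)`:
`(r+d-i, …, r+1, 0, 1, …, r+d-i)`. -/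
def rowWord (d r i : ℕ) : List ℕ :=
  (List.range (r + 2 * (d - i) + 1)).map fun t =>
    if t < d - i then r + (d - i) - t else t - (d - i)

/-- The reading word `π(T) = T_d T_{d-1} ⋯ T_1` of the distinguished tableau of
shape `Z(d,r)`. -/
def piWord (d r : ℕ) : List ℕ :=
  (List.range d).flatMap fun k => rowWord d r (d - k)

/-- `μ_i = Z(d,r)_i - λ_i`. -/
def muF (d r : ℕ) (lam : ℕ → ℕ) (i : ℕ) : ℕ := r + 2 * d + 1 - 2 * i - lam i

/-- `σ_i = μ_1 + ⋯ + μ_i`. -/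
def sigmaF (d r : ℕ) (lam : ℕ → ℕ) (i : ℕ) : ℕ := ∑ t ∈ Finset.Icc 1 i, muF d r lam t

/-- `ν_i = min{μ_i, …, μ_d}`. -/
noncomputable def nuF (d r : ℕ) (lam : ℕ → ℕ) (i : ℕ) : ℕ :=
  sInf {m : ℕ | ∃ j : ℕ, i ≤ j ∧ j ≤ d ∧ m = muF d r lam j}

/-- The word `a^λ`: the concatenation over `i = 1, …, d` of the increasing runs
`(d+r-i-μ_i+1, …, d+r-i)`. -/
def aLamWord (d r : ℕ) (lam : ℕ → ℕ) : List ℕ :=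
  (List.range d).flatMap fun k =>
    (List.range (muF d r lam (k + 1))).map fun t =>
      d + r - (k + 1) - muF d r lam (k + 1) + 1 + t

/-- Row `i` of the tableau `P(w^λ)`: entries `P(i,c) = c` for `c ≥ 0` and
`P(i,c) = r - c - ν_{d+1+c}` for `c < 0`. -/
noncomputable def rowWordP (d r : ℕ) (lam : ℕ → ℕ) (i : ℕ) : List ℕ :=
  (List.range (lam i)).map fun t =>
    if t < d - i then r + (d - i) - t - nuF d r lam (i + 1 + t) else t - (d - i)

/-- The reading word `π(P(w^λ))`. -/
noncomputable def piWordP (d r : ℕ) (lam : ℕ → ℕ) : List ℕ :=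
  (List.range d).flatMap fun k => rowWordP d r lam (d - k)

/-- The shape obtained from `λ` by adding one box at the end of row `i`. -/
def stepShape (lam : ℕ → ℕ) (i : ℕ) : ℕ → ℕ :=
  fun t => if t = i then lam i + 1 else lam t

/-- The box-adding map `f_i` on fillings: swap columns `j = λ_i + i - d` and `j + 1`
(in rows `1, …, i-1`), and put the value `N + 1` in the new box `(i, j)`. -/
def addBox (d : ℕ) (lam : ℕ → ℕ) (i : ℕ) (N : ℕ) (B : ℤ × ℤ → ℕ) : ℤ × ℤ → ℕ :=
  fun p =>
    if p = ((i : ℤ), (lam i : ℤ) + (i : ℤ) - (d : ℤ)) then N + 1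
    else if 1 ≤ p.1 ∧ p.1 < (i : ℤ) ∧ p.2 = (lam i : ℤ) + (i : ℤ) - (d : ℤ) then
      B (p.1, p.2 + 1)
    else if 1 ≤ p.1 ∧ p.1 < (i : ℤ) ∧ p.2 = (lam i : ℤ) + (i : ℤ) - (d : ℤ) + 1 then
      B (p.1, p.2 - 1)
    else B p

/-- Successively apply the box-adding maps along a list of row indices,
tracking the current shape. -/
def FmapAux (d : ℕ) : List ℕ → (ℕ → ℕ) → (ℤ × ℤ → ℕ) → (ℤ × ℤ → ℕ)
  | [], _, B => B
  | i :: rest, lam, B => FmapAux d rest (stepShape lam i) (addBox d lam i (sizeP d lam) B)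

/-- The shape after successively adding boxes along a list of row indices. -/
def shapeAux : List ℕ → (ℕ → ℕ) → (ℕ → ℕ)
  | [], lam => lam
  | i :: rest, lam => shapeAux rest (stepShape lam i)

/-- The list of row indices `1^{μ_1} 2^{μ_2} ⋯ d^{μ_d}` used to pad `λ` to `Z(d,r)`. -/
def rowsList (d r : ℕ) (lam : ℕ → ℕ) : List ℕ :=
  (List.range d).flatMap fun k => List.replicate (muF d r lam (k + 1)) (k + 1)

/-- `BS(Z(d,r))|_λ`: balanced tableaux of shape `Z(d,r)` such that for each
`i ∈ {1,…,d}` the entries `N + σ_{i-1} + 1, …, N + σ_i` all occur in row `i`. -/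
def BSRestricted (d r : ℕ) (lam : ℕ → ℕ) : Set (ℤ × ℤ → ℕ) :=
  {T | IsBalanced d (Zlam d r) T ∧ ∀ i : ℕ, 1 ≤ i → i ≤ d →
    ∀ k : ℕ, sizeP d lam + sigmaF d r lam (i - 1) + 1 ≤ k →
      k ≤ sizeP d lam + sigmaF d r lam i →
      ∃ c : ℤ, ((i : ℤ), c) ∈ Diagram d (Zlam d r) ∧ T ((i : ℤ), c) = k}

/-- `w ∈ W(B_n)` pattern embeds the signed pattern `v` (given as its one-line
notation, a list of nonzero integers). -/
def PatternEmbeds (n : ℕ) (w : Equiv.Perm ℤ) (v : List ℤ) : Prop :=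
  ∃ idx : Fin v.length → ℤ, StrictMono idx ∧
    (∀ j, 1 ≤ idx j ∧ idx j ≤ (n : ℤ)) ∧
    (∀ j, 0 < w (idx j) ↔ 0 < v.get j) ∧
    (∀ j k, |w (idx j)| < |w (idx k)| ↔ |v.get j| < |v.get k|)



/-! ### helpers -/

theorem sB_pos (a : ℕ) (ha : a ≠ 0) (i : ℤ) : sB a i =
    if i = a then (a:ℤ) + 1 else if i = a + 1 then (a:ℤ) else if i = -(a:ℤ) then -(a:ℤ) - 1
    else if i = -(a:ℤ) - 1 then -(a:ℤ) else i := by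
  simp only [sB, ha, if_false, Equiv.Perm.mul_apply, Equiv.swap_apply_def]
  split_ifs <;> omega

theorem sB_zero (i : ℤ) : sB 0 i = if i = 1 then -1 else if i = -1 then 1 else i := by
  simp only [sB, if_true, Equiv.swap_apply_def]

theorem sB_neg (a : ℕ) (i : ℤ) : sB a (-i) = - sB a i := by
  by_cases ha : a = 0
  · subst ha
    simp only [sB_zero]; split_ifs <;> omega
  · simp only [sB_pos a ha]; split_ifs <;> omega

theorem sB_sB (a : ℕ) (i : ℤ) : sB a (sB a i) = i := by
  by_cases ha : a = 0
  · subst ha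
    simp only [sB_zero]; split_ifs <;> first | omega | simp_all
  · simp only [sB_pos a ha]; split_ifs <;> omega

theorem wordProd_cons (a : ℕ) (L : List ℕ) (i : ℤ) :
    wordProd (a :: L) i = sB a (wordProd L i) := by
  simp [wordProd]

theorem wordProd_append (L M : List ℕ) (i : ℤ) :
    wordProd (L ++ M) i = wordProd L (wordProd M i) := by
  simp [wordProd]

theorem wordProd_neg (L : List ℕ) (i : ℤ) : wordProd L (-i) = - wordProd L i := by
  induction L generalizing i with
  | nil => simp [wordProd]
  | cons a L ih => rw [wordProd_cons, wordProd_cons, ih, sB_neg]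

theorem wordProd_inv_neg (L : List ℕ) (i : ℤ) : (wordProd L)⁻¹ (-i) = - (wordProd L)⁻¹ i := by
  rw [Equiv.Perm.inv_eq_iff_eq, wordProd_neg]; simp

theorem eVec_neg (k : ℤ) : eVec (-k) = - eVec k := by
  funext t
  simp only [eVec, Pi.neg_apply]
  split_ifs <;> omega

theorem eVec_inj {a b : ℤ} (h : eVec a = eVec b) : a = b := by
  have h1 := congrFun h a
  have h2 := congrFun h b
  simp only [eVec] at h1 h2
  split_ifs at h1 h2 <;> omega

theorem root_eq {A B x y : ℤ} (h : eVec A - eVec B = eVec x - eVec y) (hx : 1 ≤ x)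
    (hxy : x ≠ y) (hxy' : x ≠ -y) (hAB : A ≠ B) (hAB' : A ≠ -B) :
    (A = x ∧ B = y) ∨ (A = -y ∧ B = -x) := by
  have h1 : x = A ∨ x = -B := by
    have h1 := congrFun h x
    simp only [eVec, Pi.sub_apply] at h1
    split_ifs at h1 <;> omega
  rcases h1 with h1 | h1
  · left
    subst h1
    refine ⟨rfl, eVec_inj ?_⟩
    simpa using h
  · right
    have hB : B = -x := by omega
    subst hB
    refine ⟨eVec_inj ?_, rfl⟩
    rw [eVec_neg] at h ⊢
    funext t
    have := congrFun h t
    simp only [Pi.sub_apply, Pi.neg_apply] at this ⊢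
    omega

theorem actB_eVec (L : List ℕ) (k : ℤ) : actB (wordProd L) (eVec k) = eVec (wordProd L k) := by
  have h0 : wordProd L 0 = 0 := by
    have := wordProd_neg L 0
    simp at this; omega
  funext t
  have e0 : (wordProd L)⁻¹ t = 0 ↔ t = 0 := by
    rw [Equiv.Perm.inv_eq_iff_eq, h0]
  have e1 : (wordProd L)⁻¹ t = k ↔ t = wordProd L k := by
    rw [Equiv.Perm.inv_eq_iff_eq]
  have e2 : (wordProd L)⁻¹ t = -k ↔ t = -wordProd L k := by
    rw [Equiv.Perm.inv_eq_iff_eq, wordProd_neg]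
  simp only [actB, eVec, e0, e1, e2]

theorem alphaRoot_eq (a : ℕ) : alphaRoot a = eVec ((a:ℤ)+1) - eVec a := by
  by_cases ha : a = 0
  · subst ha
    funext t
    simp only [alphaRoot, eVec, if_true, Pi.sub_apply]
    split_ifs <;> simp_all
  · simp [alphaRoot, ha]

theorem reflOrder_eq (L : List ℕ) (t : ℕ) : reflOrder L t =
    eVec (wordProd (L.take t) ((L.getD t 0 : ℕ) + 1)) - eVec (wordProd (L.take t) (L.getD t 0 : ℕ)) := by
  rw [reflOrder, alphaRoot_eq, ← actB_eVec, ← actB_eVec]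
  rfl

/-- inverse of the partial product -/
def VV (L : List ℕ) (t : ℕ) (i : ℤ) : ℤ := (wordProd (L.take t))⁻¹ i

theorem VV_neg (L : List ℕ) (t : ℕ) (i : ℤ) : VV L t (-i) = - VV L t i := wordProd_inv_neg _ _

theorem VV_zero (L : List ℕ) (t : ℕ) : VV L t 0 = 0 := by
  have := VV_neg L t 0
  simp at this; omega

theorem VV_inj (L : List ℕ) (t : ℕ) {i j : ℤ} (h : VV L t i = VV L t j) : i = j :=
  (wordProd (L.take t))⁻¹.injective h

theorem VV_start (L : List ℕ) (i : ℤ) : VV L 0 i = i := by simp [VV, wordProd]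

theorem VV_iff (L : List ℕ) (t : ℕ) (i j : ℤ) : VV L t i = j ↔ wordProd (L.take t) j = i := by
  rw [VV, Equiv.Perm.inv_eq_iff_eq, eq_comm]

theorem VV_succ (L : List ℕ) (t : ℕ) (ht : t < L.length) (i : ℤ) :
    VV L (t+1) i = sB (L.getD t 0) (VV L t i) := by
  rw [VV_iff, List.take_succ_eq_append_getElem ht, wordProd_append]
  have : wordProd [L[t]] (sB (L.getD t 0) (VV L t i)) = VV L t i := by
    rw [wordProd_cons]; simp [wordProd, ht, sB_sB]
  rw [this, ← VV_iff]

theorem VV_pred (L : List ℕ) (t : ℕ) (ht : t < L.length) (i : ℤ) :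
    VV L t i = sB (L.getD t 0) (VV L (t+1) i) := by
  rw [VV_succ L t ht, sB_sB]

theorem reflOrder_VV (L : List ℕ) (t : ℕ) : ∃ A B : ℤ, reflOrder L t = eVec A - eVec B ∧
    VV L t A = (L.getD t 0 : ℕ) + 1 ∧ VV L t B = (L.getD t 0 : ℕ) ∧ A ≠ B ∧ A ≠ -B := by
  have hA := (VV_iff L t _ ((L.getD t 0 : ℕ) + 1)).2 rfl
  have hB := (VV_iff L t _ (L.getD t 0 : ℕ)).2 rfl
  refine ⟨_, _, reflOrder_eq L t, hA, hB, ?_, ?_⟩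
  · intro h
    rw [h] at hA; omega
  · intro h
    rw [h, VV_neg] at hA; omega

/-- A step changing the relative order of `x,y` has root `e_x - e_y`. -/
theorem flip_root (L : List ℕ) (t : ℕ) (ht : t < L.length) (x y : ℤ) (h0 : x ≠ -y)
    (h1 : VV L t y < VV L t x) (h2 : VV L (t+1) x < VV L (t+1) y) :
    reflOrder L t = eVec x - eVec y ∧ VV L (t+1) y = VV L (t+1) x + 1 := by
  have h3 : VV L t x ≠ - VV L t y := by
    rw [← VV_neg]; intro h; exact h0 (VV_inj _ _ h)
  rw [VV_succ L t ht, VV_succ L t ht] at h2 ⊢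
  rw [reflOrder_eq]
  set a := L.getD t 0
  have key : sB a (VV L t y) = sB a (VV L t x) + 1 ∧
      ((VV L t x = a + 1 ∧ VV L t y = a) ∨ (VV L t x = -(a:ℤ) ∧ VV L t y = -((a:ℤ)+1))) := by
    generalize VV L t y = Y at *
    generalize VV L t x = X at *
    by_cases ha : a = 0
    · rw [ha] at h2 ⊢
      simp only [sB_zero] at h2 ⊢
      split_ifs at h2 ⊢ <;> omega
    · simp only [sB_pos a ha] at h2 ⊢
      split_ifs at h2 ⊢ <;> omega
  refine ⟨?_, key.1⟩
  rcases key.2 with ⟨hx, hy⟩ | ⟨hx, hy⟩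
  · rw [VV_iff] at hx hy
    rw [hx, hy]
  · rw [VV_iff, wordProd_neg] at hx hy
    rw [← hx, ← hy, eVec_neg, eVec_neg]
    abel

/-- second index of the root attached to column `c` -/
def yv (d r : ℕ) (c : ℤ) : ℤ := if c ≤ 0 then c else if c ≤ r then -(c + d) else c - r

theorem fLabel_eq (d r : ℕ) (p : ℤ × ℤ) :
    fLabel d r p = eVec ((d:ℤ) + 1 - p.1) - eVec (yv d r p.2) := by
  unfold fLabel yv
  split_ifs
  · rfl
  · rw [eVec_neg, sub_neg_eq_add]
  · rfl

theorem mem_dia (d r : ℕ) (p : ℤ × ℤ) : p ∈ Diagram d (Zlam d r) ↔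
    1 ≤ p.1 ∧ p.1 ≤ d ∧ p.1 - d ≤ p.2 ∧ p.2 ≤ r + d - p.1 := by
  simp only [Diagram, Zlam, Set.mem_ofPred_eq]
  omega

theorem yv_spec (d r : ℕ) (p : ℤ × ℤ) (hp : p ∈ Diagram d (Zlam d r)) :
    yv d r p.2 < d + 1 - p.1 ∧ yv d r p.2 ≠ -(d + 1 - p.1) ∧
    (-(d - p.1) ≤ yv d r p.2 ∨ (-(d + r : ℤ) ≤ yv d r p.2 ∧ yv d r p.2 < - d)) := by
  rw [mem_dia] at hp
  unfold yv
  split_ifs <;> omega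

theorem fLabel_root (d r : ℕ) (p : ℤ × ℤ) (hp : p ∈ Diagram d (Zlam d r)) {A B : ℤ}
    (h : eVec A - eVec B = fLabel d r p) (hAB : A ≠ B) (hAB' : A ≠ -B) :
    (A = d + 1 - p.1 ∧ B = yv d r p.2) ∨ (A = -yv d r p.2 ∧ B = -(d + 1 - p.1)) := by
  have hs := yv_spec d r p hp
  rw [fLabel_eq] at h
  rw [mem_dia] at hp
  exact root_eq h (by omega) (by omega) (by omega) hAB hAB'

theorem fLabel_inj (d r : ℕ) (p q : ℤ × ℤ) (hp : p ∈ Diagram d (Zlam d r))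
    (hq : q ∈ Diagram d (Zlam d r)) (h : fLabel d r p = fLabel d r q) : p = q := by
  have hs := yv_spec d r p hp
  have hsq := yv_spec d r q hq
  rw [fLabel_eq] at h
  have := fLabel_root d r q hq h (by rw [mem_dia] at hp; omega) (by rw [mem_dia] at hp; omega)
  rw [mem_dia] at hp hq
  rcases this with h | h
  · obtain ⟨h1, h2⟩ := h
    ext
    · omega
    · unfold yv at h2
      split_ifs at h2 <;> omega
  · omega

/-! ### an explicit word for `w^{(d,r)}` -/

/-- `1, …, m` -/
def upW (m : ℕ) : List ℕ := (List.range m).map (· + 1)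

theorem upW_prod (m : ℕ) (i : ℤ) : wordProd (upW m) i =
    if 1 ≤ i ∧ i ≤ m then i + 1 else if i = m + 1 then 1
    else if -(m:ℤ) ≤ i ∧ i ≤ -1 then i - 1 else if i = -(m:ℤ) - 1 then -1 else i := by
  induction m generalizing i with
  | zero =>
    simp only [upW, wordProd, List.range_zero, List.map_nil, List.prod_nil, Equiv.Perm.one_apply]
    push_cast
    split_ifs <;> omega
  | succ m ih =>
    have : upW (m+1) = upW m ++ [m+1] := by simp [upW, List.range_succ]
    rw [this, wordProd_append, wordProd_cons, ih]
    simp only [wordProd, List.map_nil, List.prod_nil, Equiv.Perm.one_apply]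
    rw [sB_pos _ (by omega)]
    push_cast
    split_ifs <;> omega

theorem revW_prod (L : List ℕ) (i j : ℤ) (h : wordProd L i = j) : wordProd L.reverse j = i := by
  induction L generalizing i j with
  | nil => simpa [wordProd] using h.symm
  | cons a L ih =>
    rw [wordProd_cons] at h
    rw [List.reverse_cons, wordProd_append]
    apply ih
    rw [← h, wordProd_cons]
    simp [wordProd, sB_sB]

theorem downW_prod (m : ℕ) (i : ℤ) : wordProd (upW m).reverse i =
    if 2 ≤ i ∧ i ≤ m + 1 then i - 1 else if i = 1 then m + 1
    else if -(m:ℤ) - 1 ≤ i ∧ i ≤ -2 then i + 1 else if i = -1 then -(m:ℤ) - 1 else i := by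
  apply revW_prod
  rw [upW_prod]
  split_ifs <;> omega

/-- explicit word -/
def wW (r : ℕ) : ℕ → List ℕ
  | 0 => []
  | d+1 => (upW d).reverse ++ (0 :: upW (d + r)) ++ wW r d

theorem wW_len (r d : ℕ) : (wW r d).length = d * (d + r) := by
  induction d with
  | zero => simp [wW]
  | succ d ih => simp [wW, ih, upW]; ring

theorem wW_lt (r d : ℕ) : ∀ a ∈ wW r d, a < d + r := by
  induction d with
  | zero => simp [wW]
  | succ d ih =>
    intro a ha
    simp only [wW, upW, List.mem_append, List.mem_reverse, List.mem_cons, List.mem_map,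
      List.mem_range] at ha
    rcases ha with (⟨b, hb, rfl⟩ | rfl | ⟨b, hb, rfl⟩) | h
    · omega
    · omega
    · omega
    · have := ih a h; omega

theorem wW_prod (r d : ℕ) (i : ℤ) : wordProd (wW r d) i =
    if 1 ≤ i ∧ i ≤ r then i + d else if r < i ∧ i ≤ d + r then -(i - r)
    else if -(r:ℤ) ≤ i ∧ i ≤ -1 then i - d else if -(d + r : ℤ) ≤ i ∧ i < - r then -(i + r) else i := by
  induction d generalizing i with
  | zero => 
    simp only [wW, wordProd, List.map_nil, List.prod_nil, Equiv.Perm.one_apply]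
    push_cast
    split_ifs <;> omega
  | succ d ih =>
    rw [wW, wordProd_append, wordProd_append, wordProd_cons]
    have e1 := ih i
    generalize wordProd (wW r d) i = X1 at *
    have e2 := upW_prod (d + r) X1
    generalize wordProd (upW (d + r)) X1 = X2 at *
    have e3 := sB_zero X2
    generalize sB 0 X2 = X3 at *
    have e4 := downW_prod d X3
    generalize wordProd (upW d).reverse X3 = X4 at *
    clear ih
    push_cast at *
    split_ifs at e1 <;> split_ifs at e2 <;> omega

theorem wdr_apply (d r : ℕ) (w : Equiv.Perm ℤ) (hw : IsWdr d r w) (i : ℤ) : w i =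
    if 1 ≤ i ∧ i ≤ r then i + d else if r < i ∧ i ≤ d + r then -(i - r)
    else if -(r:ℤ) ≤ i ∧ i ≤ -1 then i - d else if -(d + r : ℤ) ≤ i ∧ i < - r then -(i + r) else i := by
  obtain ⟨⟨h1, h2⟩, h3, h4⟩ := hw
  have h0 : w 0 = 0 := by
    have := h1 0
    simp at this; omega
  have h1' := h1 (-i)
  rw [neg_neg] at h1'
  split_ifs with a b c e
  · rw [h3 i a.1 a.2]; ring
  · rw [h4 i b.1 b.2]
  · rw [h1', h3 (-i) (by omega) (by omega)]; ring
  · rw [h1', h4 (-i) (by omega) (by omega)]; ring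
  · by_cases hi : i = 0
    · rw [hi, h0]
    · apply h2
      rw [lt_abs]; push_cast; omega

theorem length_le (d r : ℕ) (w : Equiv.Perm ℤ) (hw : IsWdr d r w) (L : List ℕ)
    (hL : IsReducedWord (d + r) w L) : L.length ≤ d * (d + r) := by
  rw [hL.2.2]
  apply Nat.sInf_le
  refine ⟨wW r d, wW_lt r d, ?_, wW_len r d⟩
  ext i
  rw [wW_prod, wdr_apply d r w hw]

/-! ### counting boxes -/

theorem sizeZ (d r : ℕ) : sizeP d (Zlam d r) = d * (d + r) := by
  have h : ∀ k ≤ d, ∑ i ∈ Finset.Icc 1 k, Zlam d r i + k * k = k * (r + 2 * d) := by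
    intro k hk
    induction k with
    | zero => simp
    | succ k ih =>
      rw [Finset.sum_Icc_succ_top (by omega)]
      have := ih (by omega)
      have h2 : Zlam d r (k+1) + 2 * k + 1 = r + 2 * d := by simp only [Zlam]; omega
      nlinarith
  have := h d le_rfl
  rw [sizeP]
  nlinarith

theorem dia_card (d r : ℕ) : ∃ S : Finset (ℤ × ℤ), (∀ p, p ∈ S ↔ p ∈ Diagram d (Zlam d r)) ∧
    S.card = sizeP d (Zlam d r) := by
  classical
  refine ⟨(Finset.Icc 1 d).biUnion fun i =>
    (Finset.Icc ((i:ℤ) - d) (r + d - i)).image (fun c : ℤ => ((i:ℤ), c)),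
    ?_, ?_⟩
  · rintro ⟨i, c⟩
    rw [mem_dia]
    simp only [Finset.mem_biUnion, Finset.mem_image, Finset.mem_Icc, Prod.mk.injEq]
    constructor
    · rintro ⟨a, h1, b, h2, rfl, rfl⟩
      omega
    · intro h
      exact ⟨i.toNat, by omega, c, by omega, by omega, rfl⟩
  · rw [Finset.card_biUnion]
    · rw [sizeP]
      apply Finset.sum_congr rfl
      intro i hi
      rw [Finset.mem_Icc] at hi
      rw [Finset.card_image_of_injective _ (fun a b h => by simpa using h), Int.card_Icc, Zlam]
      omega
    · intro i _ j _ hij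
      rw [Function.onFun, Finset.disjoint_left]
      simp only [Finset.mem_image]
      rintro p ⟨a, _, rfl⟩ ⟨b, _, h⟩
      simp only [Prod.mk.injEq] at h
      omega

/-- the standing hypotheses, in usable form -/
structure Good (d r : ℕ) (L : List ℕ) (B : ℤ × ℤ → ℕ) : Prop where
  len : L.length = sizeP d (Zlam d r)
  fin : ∀ x : ℤ, 1 ≤ x → x ≤ d → VV L L.length x = -(x + r)
  fin' : ∀ c : ℤ, 1 ≤ c → c ≤ r → VV L L.length (d + c) = c
  rng : ∀ p ∈ Diagram d (Zlam d r), 1 ≤ B p ∧ B p ≤ L.length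
  lab : ∀ p ∈ Diagram d (Zlam d r), reflOrder L (B p - 1) = fLabel d r p
  inj : ∀ p ∈ Diagram d (Zlam d r), ∀ q ∈ Diagram d (Zlam d r), B p = B q → p = q
  surj : ∀ t, t < L.length → ∃ p ∈ Diagram d (Zlam d r), B p = t + 1

theorem good_of (d r : ℕ) (w : Equiv.Perm ℤ) (hw : IsWdr d r w)
    (L : List ℕ) (hL : IsReducedWord (d + r) w L)
    (B : ℤ × ℤ → ℕ)
    (hB : ∀ p ∈ Diagram d (Zlam d r),
      1 ≤ B p ∧ B p ≤ sizeP d (Zlam d r) ∧ reflOrder L (B p - 1) = fLabel d r p) :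
    Good d r L B := by
  have hinj : ∀ p ∈ Diagram d (Zlam d r), ∀ q ∈ Diagram d (Zlam d r), B p = B q → p = q := by
    intro p hp q hq h
    apply fLabel_inj d r p q hp hq
    rw [← (hB p hp).2.2, ← (hB q hq).2.2, h]
  obtain ⟨S, hS, hc⟩ := dia_card d r
  have himg : S.image B = Finset.Icc 1 (sizeP d (Zlam d r)) := by
    apply Finset.eq_of_subset_of_card_le
    · intro t ht
      obtain ⟨p, hp, rfl⟩ := Finset.mem_image.1 ht
      have := hB p ((hS p).1 hp)
      rw [Finset.mem_Icc]; omega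
    · rw [Finset.card_image_of_injOn, hc]
      · simp
      · intro p hp q hq h
        exact hinj p ((hS p).1 hp) q ((hS q).1 hq) h
  have hsurj : ∀ t, t < sizeP d (Zlam d r) → ∃ p ∈ Diagram d (Zlam d r), B p = t + 1 := by
    intro t ht
    have : t + 1 ∈ S.image B := by rw [himg, Finset.mem_Icc]; omega
    obtain ⟨p, hp, h⟩ := Finset.mem_image.1 this
    exact ⟨p, (hS p).1 hp, h⟩
  have hle := length_le d r w hw L hL
  rw [← sizeZ] at hle
  have hlen : L.length = sizeP d (Zlam d r) := by
    apply le_antisymm hle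
    by_contra hlt
    obtain ⟨p, hp, h⟩ := hsurj L.length (by omega)
    have h3 := (hB p hp).2.2
    rw [h] at h3
    simp only [Nat.add_sub_cancel] at h3
    have hg : L.getD L.length 0 = 0 := by simp
    rw [reflOrder_eq, hg, List.take_length, hL.2.1] at h3
    have h0 : w 0 = 0 := by
      rw [wdr_apply d r w hw]; split_ifs <;> omega
    have h1 : w 1 = 1 + d ∨ w 1 = -1 := by
      rw [mem_dia] at hp
      rw [wdr_apply d r w hw]; split_ifs <;> omega
    have e := fLabel_root d r p hp h3 (by push_cast; omega)
      (by push_cast; omega)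
    have hs := yv_spec d r p hp
    rw [mem_dia] at hp
    push_cast at e
    omega
  have hV : ∀ i j, w j = i → VV L L.length i = j := by
    intro i j h
    rw [VV_iff, List.take_length, hL.2.1, h]
  refine ⟨hlen, ?_, ?_, ?_, fun p hp => (hB p hp).2.2, hinj, by rwa [hlen]⟩
  · intro x h1 h2
    apply hV
    rw [wdr_apply d r w hw]
    split_ifs <;> omega
  · intro x h1 h2
    apply hV
    rw [wdr_apply d r w hw]
    split_ifs <;> omega
  · intro p hp
    have := hB p hp
    omega

/-! ### times -/

theorem Good.noflip {d r : ℕ} {L : List ℕ} {B : ℤ × ℤ → ℕ} (G : Good d r L B) (t : ℕ)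
    (ht : t < L.length) (x y : ℤ) (h0 : x ≠ -y) (h00 : x ≠ y)
    (h1 : VV L t y < VV L t x) (h2 : VV L (t+1) x < VV L (t+1) y) :
    ∃ p ∈ Diagram d (Zlam d r), B p = t + 1 ∧ fLabel d r p = eVec x - eVec y ∧
      ((x = d + 1 - p.1 ∧ y = yv d r p.2) ∨ (x = -yv d r p.2 ∧ y = -(d + 1 - p.1))) := by
  obtain ⟨p, hp, hpt⟩ := G.surj t ht
  have h3 := G.lab p hp
  have h4 := (flip_root L t ht x y h0 h1 h2).1
  rw [hpt, Nat.add_sub_cancel, h4] at h3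
  exact ⟨p, hp, hpt, h3.symm, fLabel_root d r p hp h3 h00 h0⟩

theorem Good.final {d r : ℕ} {L : List ℕ} {B : ℤ × ℤ → ℕ} (G : Good d r L B) (p : ℤ × ℤ)
    (hp : p ∈ Diagram d (Zlam d r)) :
    VV L L.length (d + 1 - p.1) < VV L L.length (yv d r p.2) := by
  rw [mem_dia] at hp
  rw [G.fin _ (by omega) (by omega)]
  unfold yv
  split_ifs with h1 h2
  · by_cases h : p.2 = 0
    · rw [h, VV_zero]; omega
    · rw [← neg_neg p.2, VV_neg, G.fin _ (by omega) (by omega)]; omega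
  · rw [VV_neg, add_comm p.2, G.fin' _ (by omega) (by omega)]; omega
  · rw [G.fin _ (by omega) (by omega)]; omega

theorem Good.time {d r : ℕ} {L : List ℕ} {B : ℤ × ℤ → ℕ} (G : Good d r L B) (p : ℤ × ℤ)
    (hp : p ∈ Diagram d (Zlam d r)) (s : ℕ) (hs : s ≤ L.length) :
    VV L s (yv d r p.2) < VV L s (d + 1 - p.1) ↔ s < B p := by
  have hy := yv_spec d r p hp
  have hd := (mem_dia d r p).1 hp
  have hne : ∀ t, VV L t (yv d r p.2) ≠ VV L t (d + 1 - p.1) := by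
    intro t h
    have := VV_inj _ _ h
    omega
  have hmono : ∀ t < L.length, VV L t (yv d r p.2) < VV L t (d + 1 - p.1) → B p ≠ t + 1 →
      VV L (t+1) (yv d r p.2) < VV L (t+1) (d + 1 - p.1) := by
    intro t ht h1 h2
    by_contra h3
    have h4 := hne (t+1)
    obtain ⟨q, hq, hqt, hl, -⟩ := G.noflip t ht _ _ (by omega) (by omega) h1 (by omega)
    rw [← fLabel_eq] at hl
    have := fLabel_inj d r q p hq hp hl
    subst this
    exact h2 hqt
  constructor
  · intro h
    by_contra hlt
    have : ∀ k, s + k ≤ L.length →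
        VV L (s + k) (yv d r p.2) < VV L (s + k) (d + 1 - p.1) := by
      intro k
      induction k with
      | zero => intro _; exact h
      | succ k ih =>
        intro hk
        exact hmono (s + k) (by omega) (ih (by omega)) (by omega)
    have h1 := this (L.length - s) (by omega)
    rw [show s + (L.length - s) = L.length by omega] at h1
    have := G.final p hp
    omega
  · intro h
    induction s with
    | zero => rw [VV_start, VV_start]; omega
    | succ s ih => exact hmono s (by omega) (ih (by omega) (by omega)) (by omega)

theorem Good.adj {d r : ℕ} {L : List ℕ} {B : ℤ × ℤ → ℕ} (G : Good d r L B) (p : ℤ × ℤ)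
    (hp : p ∈ Diagram d (Zlam d r)) :
    VV L (B p) (yv d r p.2) = VV L (B p) (d + 1 - p.1) + 1 := by
  have hy := yv_spec d r p hp
  have hd := (mem_dia d r p).1 hp
  have hr := G.rng p hp
  have h1 := (G.time p hp (B p - 1) (by omega)).2 (by omega)
  have h2 := (G.time p hp (B p) (by omega)).1.mt (by omega)
  have hne : VV L (B p) (yv d r p.2) ≠ VV L (B p) (d + 1 - p.1) := by
    intro h
    have := VV_inj _ _ h
    omega
  have e : B p - 1 + 1 = B p := by omega
  have := (flip_root L (B p - 1) (by omega) _ _ (by omega) h1 (by rw [e]; omega)).2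
  rwa [e] at this

theorem Good.extra {d r : ℕ} {L : List ℕ} {B : ℤ × ℤ → ℕ} (G : Good d r L B) (a b : ℤ)
    (ha : d < a) (hb : 0 ≤ b) (hab : b < a) (s : ℕ) (hs : s ≤ L.length) :
    VV L s b < VV L s a := by
  induction s with
  | zero => rw [VV_start, VV_start]; omega
  | succ s ih =>
    have h1 := ih (by omega)
    by_contra h2
    have hne : VV L (s+1) b ≠ VV L (s+1) a := by
      intro h
      have := VV_inj _ _ h
      omega
    obtain ⟨q, hq, hqt, -, hl⟩ := G.noflip s (by omega) a b (by omega) (by omega) h1 (by omega)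
    rw [mem_dia] at hq
    omega

/-! ### balancedness -/

theorem hook_set {d r : ℕ} {L : List ℕ} {B : ℤ × ℤ → ℕ} (G : Good d r L B) (p : ℤ × ℤ)
    (hp : p ∈ Diagram d (Zlam d r)) (q : ℤ × ℤ) :
    (q ∈ ExtHook d (Zlam d r) p.1 p.2 ∧ B p < ExtFilling d B q) ↔
    (1 ≤ q.1 ∧ q.1 ≤ d ∧ q.2 ≤ r + d - q.1 ∧
      ((q.1 = p.1 ∧ p.2 < q.2) ∨ (q.2 = p.2 ∧ p.1 < q.1 ∧ q.1 - d ≤ q.2) ∨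
        (p.2 < 0 ∧ q.1 = d + 1 + p.2 ∧ p.2 ≤ q.2))) ∧
      VV L (B p) (yv d r q.2) < VV L (B p) (d + 1 - q.1) := by
  have hd := (mem_dia d r p).1 hp
  have hr := G.rng p hp
  by_cases hq : q ∈ Diagram d (Zlam d r)
  · rw [G.time q hq _ hr.2]
    have hE : ExtFilling d B q = B q := by
      rw [mem_dia] at hq
      rw [ExtFilling, if_neg (by omega)]
    rw [hE]
    have e : q = (p.1, p.2) ↔ q = p := by simp
    simp only [ExtHook, Hook, Set.mem_union, Set.mem_singleton_iff, Set.mem_ofPred_eq, hq, true_and, e]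
    rw [mem_dia] at hq
    constructor
    · rintro ⟨h1, h2⟩
      refine ⟨?_, h2⟩
      rcases h1 with ((rfl | h) | h) | ⟨h, h'⟩
      · omega
      · omega
      · omega
      · rw [h'] at hq
        simp only at hq
        omega
    · rintro ⟨h1, h2⟩
      refine ⟨?_, h2⟩
      left
      rcases h1.2.2.2 with h | h | h
      · left; right; left; omega
      · left; right; right; omega
      · right; omega
  · simp only [ExtHook, Hook, Set.mem_union, Set.mem_singleton_iff, Set.mem_ofPred_eq, hq, false_and, or_false, false_or]
    constructor
    · rintro ⟨h1, h2⟩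
      rcases h1 with h1 | ⟨h, h1⟩
      · exact absurd (h1 ▸ hp) hq
      · subst h1
        simp only at hq ⊢
        refine ⟨by first | omega | (simp; omega), ?_⟩
        rw [ExtFilling, if_pos (by simp only; omega)] at h2
        have hm : ((d:ℤ) + 1 + p.2, (0:ℤ)) ∈ Diagram d (Zlam d r) := by
          rw [mem_dia]; simp only; omega
        have := (G.time _ hm _ hr.2).2 h2
        simp only at this
        have e : yv d r 0 = 0 := by simp [yv]
        rw [e, VV_zero] at this
        have e2 : yv d r p.2 = -((d:ℤ) + 1 - (d + 1 + p.2)) := by unfold yv; split_ifs <;> omega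
        rw [e2, VV_neg]; omega
    · rintro ⟨h1, h2⟩
      rw [mem_dia] at hq
      have hc : p.2 < 0 ∧ q.1 = d + 1 + p.2 ∧ q.2 = p.2 := by omega
      have hqe : q = ((d:ℤ) + 1 + p.2, p.2) := by ext <;> simp <;> omega
      refine ⟨Or.inr ⟨hc.1, hqe⟩, ?_⟩
      rw [ExtFilling, if_pos (by omega), hc.2.1]
      have hm : ((d:ℤ) + 1 + p.2, (0:ℤ)) ∈ Diagram d (Zlam d r) := by
        rw [mem_dia]; simp only; omega
      rw [← G.time _ hm _ hr.2]
      simp only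
      have e : yv d r 0 = 0 := by simp [yv]
      rw [e, VV_zero]
      rw [hc.2.1, hc.2.2] at h2
      have e2 : yv d r p.2 = -((d:ℤ) + 1 - (d + 1 + p.2)) := by unfold yv; split_ifs <;> omega
      rw [e2, VV_neg] at h2; omega

theorem ncard_Icc_of {s : Set (ℤ × ℤ)} (a b : ℤ) (hab : a ≤ b + 1) (f : ℤ × ℤ → ℤ)
    (h1 : ∀ q ∈ s, a ≤ f q ∧ f q ≤ b) (h2 : ∀ q ∈ s, ∀ q' ∈ s, f q = f q' → q = q')
    (h3 : ∀ m, a ≤ m → m ≤ b → ∃ q ∈ s, f q = m) : (s.ncard : ℤ) = b + 1 - a := by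
  have : s.ncard = ((Finset.Icc a b : Finset ℤ) : Set ℤ).ncard := by
    apply Set.ncard_congr (fun q _ => f q)
    · intro q hq
      simpa using h1 q hq
    · intro q q' hq hq' h
      exact h2 q hq q' hq' h
    · intro m hm
      simp only [Finset.coe_Icc, Set.mem_Icc] at hm
      obtain ⟨q, hq, h⟩ := h3 m hm.1 hm.2
      exact ⟨q, hq, h⟩
  rw [this, Set.ncard_coe_finset, Int.card_Icc]
  omega

theorem balanced_nonneg {d r : ℕ} {L : List ℕ} {B : ℤ × ℤ → ℕ} (G : Good d r L B) (p : ℤ × ℤ)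
    (hp : p ∈ Diagram d (Zlam d r)) (hc : 0 ≤ p.2) :
    ({q ∈ ExtHook d (Zlam d r) p.1 p.2 | B p < ExtFilling d B q}.ncard : ℤ) = r + d - p.1 - p.2 := by
  have hd := (mem_dia d r p).1 hp
  have hr := G.rng p hp
  have hadj := G.adj p hp
  have hy := yv_spec d r p hp
  rw [ncard_Icc_of (p.2 + 1) (r + d - p.1) (by omega)
    (fun q => if q.1 = p.1 then q.2 else r + d + 1 - q.1)]
  · ring
  · intro q hq
    have := (hook_set G p hp q).1 hq
    split_ifs <;> omega
  · intro q hq q' hq' h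
    have h1 := (hook_set G p hp q).1 hq
    have h2 := (hook_set G p hp q').1 hq'
    obtain ⟨h1, h1v⟩ := h1
    obtain ⟨h2, h2v⟩ := h2
    split_ifs at h with ha hb hb
    · ext <;> omega
    · have e : yv d r q.2 = d + 1 - q'.1 := by unfold yv; split_ifs <;> omega
      have e2 : q'.2 = p.2 := by omega
      rw [e, ha] at h1v
      rw [e2] at h2v
      omega
    · have e : yv d r q'.2 = d + 1 - q.1 := by unfold yv; split_ifs <;> omega
      have e2 : q.2 = p.2 := by omega
      rw [e, hb] at h2v
      rw [e2] at h1v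
      omega
    · ext <;> omega
  · intro m hm1 hm2
    by_cases hmr : m ≤ r
    · refine ⟨(p.1, m), (hook_set G p hp _).2 ⟨?_, ?_⟩, by simp⟩
      · first | omega | (simp; omega)
      · simp only
        have e : yv d r m = -(m + d) := by unfold yv; split_ifs <;> omega
        have hne : VV L (B p) (yv d r m) ≠ VV L (B p) (d + 1 - p.1) := by
          intro h
          have := VV_inj _ _ h
          omega
        rw [e, VV_neg] at hne ⊢
        by_cases h0 : p.2 = 0
        · have e0 : yv d r p.2 = 0 := by rw [h0]; simp [yv]
          have := G.extra (m + d) 0 (by omega) (by omega) (by omega) (B p) hr.2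
          rw [e0, VV_zero] at hadj
          rw [VV_zero] at this
          omega
        · have e0 : yv d r p.2 = -(p.2 + d) := by unfold yv; split_ifs <;> omega
          have := G.extra (m + d) (p.2 + d) (by omega) (by omega) (by omega) (B p) hr.2
          rw [e0, VV_neg] at hadj
          omega
    · have e : yv d r m = m - r := by unfold yv; split_ifs <;> omega
      by_cases hv : VV L (B p) (m - r) < VV L (B p) (d + 1 - p.1)
      · refine ⟨(p.1, m), (hook_set G p hp _).2 ⟨?_, ?_⟩, by simp⟩
        · first | omega | (simp; omega)
        · simp only [e]; exact hv
      · refine ⟨(r + d + 1 - m, p.2), (hook_set G p hp _).2 ⟨?_, ?_⟩, ?_⟩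
        · first | omega | (simp; omega)
        · simp only
          have e1 : (d:ℤ) + 1 - (r + d + 1 - m) = m - r := by ring
          rw [e1]
          have hne : VV L (B p) (m - r) ≠ VV L (B p) (d + 1 - p.1) := by
            intro h
            have := VV_inj _ _ h
            omega
          have hne2 : VV L (B p) (m - r) ≠ VV L (B p) (yv d r p.2) := by
            intro h
            have := VV_inj _ _ h
            unfold yv at this
            split_ifs at this <;> omega
          omega
        · simp only
          rw [if_neg (by omega)]; ring

/-- index of a box in the negative-column case -/
def psiN (d r : ℕ) (p q : ℤ × ℤ) : ℤ :=
  if q.1 = p.1 then q.2 else if q.2 = p.2 then r + d + 1 - q.1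
  else if q.2 < 0 then r - q.2 else if q.2 = 0 then 0 else if q.2 ≤ r then r + d - p.1 + q.2
  else r - q.2

theorem psiN_key {d r : ℕ} {L : List ℕ} {B : ℤ × ℤ → ℕ} (G : Good d r L B) (p : ℤ × ℤ)
    (hp : p ∈ Diagram d (Zlam d r)) (hc : p.2 < 0) (q : ℤ × ℤ)
    (hq : q ∈ ExtHook d (Zlam d r) p.1 p.2 ∧ B p < ExtFilling d B q) :
    p.2 + 1 ≤ psiN d r p q ∧ psiN d r p q ≤ 2 * r + d - p.1 ∧
    (q.1 = p.1 → psiN d r p q = q.2 ∧ q.2 ≤ r + d - p.1 ∧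
      VV L (B p) (yv d r q.2) < VV L (B p) (d + 1 - p.1)) ∧
    (q.1 ≠ p.1 → psiN d r p q ≤ r + d - p.1 →
      VV L (B p) (yv d r p.2) < VV L (B p) (yv d r (psiN d r p q))) := by
  have hd := (mem_dia d r p).1 hp
  obtain ⟨h1, hv⟩ := (hook_set G p hp q).1 hq
  have ep : yv d r p.2 = p.2 := by unfold yv; split_ifs <;> omega
  refine ⟨?_, ?_, ?_, ?_⟩
  · unfold psiN; split_ifs <;> omega
  · unfold psiN; split_ifs <;> omega
  · intro h
    refine ⟨by simp [psiN, h], by omega, ?_⟩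
    rwa [h] at hv
  · intro h hle
    by_cases h2 : q.2 = p.2
    · have e : yv d r (psiN d r p q) = d + 1 - q.1 := by
        unfold psiN yv; split_ifs <;> omega
      rw [e, ← h2]; exact hv
    · have h3 : q.1 = d + 1 + p.2 := by omega
      have e : yv d r (psiN d r p q) = -yv d r q.2 := by
        unfold psiN at hle ⊢
        rw [if_neg h, if_neg h2] at hle ⊢
        unfold yv; split_ifs at hle ⊢ <;> omega
      rw [e, VV_neg, ep]
      rw [h3, show (d:ℤ) + 1 - (d + 1 + p.2) = -p.2 by ring, VV_neg] at hv
      omega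

theorem balanced_neg {d r : ℕ} {L : List ℕ} {B : ℤ × ℤ → ℕ} (G : Good d r L B) (p : ℤ × ℤ)
    (hp : p ∈ Diagram d (Zlam d r)) (hc : p.2 < 0) :
    ({q ∈ ExtHook d (Zlam d r) p.1 p.2 | B p < ExtFilling d B q}.ncard : ℤ) =
      2 * r + d - p.1 - p.2 := by
  have hd := (mem_dia d r p).1 hp
  have hr := G.rng p hp
  have hadj := G.adj p hp
  have hy := yv_spec d r p hp
  have ep : yv d r p.2 = p.2 := by unfold yv; split_ifs <;> omega
  rw [ncard_Icc_of (p.2 + 1) (2 * r + d - p.1) (by omega) (psiN d r p)]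
  · ring
  · intro q hq
    have := psiN_key G p hp hc q hq
    omega
  · intro q hq q' hq' h
    obtain ⟨-, -, k1, k2⟩ := psiN_key G p hp hc q hq
    obtain ⟨-, -, k3, k4⟩ := psiN_key G p hp hc q' hq'
    by_cases ha : q.1 = p.1
    · by_cases hb : q'.1 = p.1
      · have := k1 ha
        have := k3 hb
        ext <;> omega
      · exfalso
        have k1 := k1 ha
        have k4 := k4 hb (by omega)
        rw [← h, k1.1] at k4
        omega
    · by_cases hb : q'.1 = p.1
      · exfalso
        have k3 := k3 hb
        have k2 := k2 ha (by omega)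
        rw [h, k3.1] at k2
        omega
      · have h1 := ((hook_set G p hp q).1 hq).1
        have h2 := ((hook_set G p hp q').1 hq').1
        unfold psiN at h
        rw [if_neg ha, if_neg hb] at h
        clear k1 k2 k3 k4 hadj hq hq'
        by_cases h3 : q.2 = p.2 <;> by_cases h4 : q'.2 = p.2
        · rw [if_pos h3, if_pos h4] at h
          ext <;> omega
        · rw [if_pos h3, if_neg h4] at h
          split_ifs at h <;> omega
        · rw [if_neg h3, if_pos h4] at h
          split_ifs at h <;> omega
        · rw [if_neg h3, if_neg h4] at h
          ext
          · omega
          · split_ifs at h <;> omega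
  · intro m hm1 hm2
    by_cases hmx : r + d - p.1 < m
    · -- extra boxes in the lower row
      refine ⟨(d + 1 + p.2, m - (r + d - p.1)), (hook_set G p hp _).2 ⟨?_, ?_⟩, ?_⟩
      · first | omega | (simp; omega)
      · simp only
        have e : yv d r (m - (r + d - p.1)) = -(m - (r + d - p.1) + d) := by
          unfold yv; split_ifs <;> omega
        have := G.extra (m - (r + d - p.1) + d) (-p.2) (by omega) (by omega) (by omega) (B p) hr.2
        rw [show (d:ℤ) + 1 - (d + 1 + p.2) = -p.2 by ring, e, VV_neg, VV_neg]
        rw [VV_neg] at this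
        have hne : VV L (B p) (m - (r + d - p.1) + d) ≠ VV L (B p) (p.2) := by
          intro h
          have := VV_inj _ _ h
          omega
        have hx : VV L (B p) (d + 1 - p.1) < VV L (B p) (m - (r + d - p.1) + d) :=
          G.extra _ _ (by omega) (by omega) (by omega) (B p) hr.2
        rw [ep] at hadj
        omega
      · simp only [psiN]
        rw [if_neg (by omega), if_neg (by omega), if_neg (by omega), if_neg (by omega),
          if_pos (by omega)]
        ring
    by_cases hv : VV L (B p) (yv d r m) < VV L (B p) (d + 1 - p.1)
    · refine ⟨(p.1, m), (hook_set G p hp _).2 ⟨?_, ?_⟩, by simp [psiN]⟩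
      · first | omega | (simp; omega)
      · exact hv
    have hmem : (p.1, m) ∈ Diagram d (Zlam d r) := by
      rw [mem_dia]; simp only; omega
    have hys := yv_spec d r _ hmem
    simp only at hys
    have hne : VV L (B p) (yv d r m) ≠ VV L (B p) (d + 1 - p.1) := by
      intro h
      have := VV_inj _ _ h
      omega
    have hne2 : VV L (B p) (yv d r m) ≠ VV L (B p) (yv d r p.2) := by
      intro h
      have := VV_inj _ _ h
      unfold yv at this
      split_ifs at this <;> omega
    by_cases hmr : 0 < m ∧ m ≤ r
    · exfalso
      have e : yv d r m = -(m + d) := by unfold yv; split_ifs <;> omega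
      have := G.extra (m + d) (-p.2) (by omega) (by omega) (by omega) (B p) hr.2
      rw [e, VV_neg] at hv hne2 hne
      rw [VV_neg] at this
      rw [ep] at hadj hne2
      omega
    have hlt : VV L (B p) p.2 < VV L (B p) (yv d r m) := by
      rw [ep] at hadj hne2; omega
    by_cases hm3 : r - p.2 ≤ m
    · have e : yv d r m = m - r := by unfold yv; split_ifs <;> omega
      refine ⟨(r + d + 1 - m, p.2), (hook_set G p hp _).2 ⟨?_, ?_⟩, ?_⟩
      · first | omega | (simp; omega)
      · simp only
        have e1 : (d:ℤ) + 1 - (r + d + 1 - m) = m - r := by ring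
        rw [e1, ← e, ep]; exact hlt
      · simp only [psiN]
        rw [if_neg (by omega), if_true]; ring
    · refine ⟨(d + 1 + p.2, if m = 0 then 0 else r - m), (hook_set G p hp _).2 ⟨?_, ?_⟩, ?_⟩
      · split_ifs <;> first | omega | (simp; omega)
      · simp only
        have e : yv d r (if m = 0 then 0 else r - m) = - yv d r m := by
          unfold yv; split_ifs <;> omega
        rw [e, VV_neg, show (d:ℤ) + 1 - (d + 1 + p.2) = -p.2 by ring, VV_neg]
        omega
      · simp only [psiN]
        rw [if_neg (by omega)]
        split_ifs <;> omega

theorem Good.balanced {d r : ℕ} {L : List ℕ} {B : ℤ × ℤ → ℕ} (G : Good d r L B)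
    (hB0 : ∀ p : ℤ × ℤ, p ∉ Diagram d (Zlam d r) → B p = 0) : IsBalanced d (Zlam d r) B := by
  refine ⟨⟨⟨?_, ?_, ?_⟩, hB0⟩, ?_⟩
  · intro p hp
    have := G.rng p hp
    rw [G.len] at this
    exact this
  · intro p hp q hq h
    exact G.inj p hp q hq h
  · intro t ht
    rw [← G.len, Set.mem_Icc] at ht
    obtain ⟨p, hp, h⟩ := G.surj (t - 1) (by omega)
    exact ⟨p, hp, by omega⟩
  · intro p hp
    have hd := (mem_dia d r p).1 hp
    by_cases hc : 0 ≤ p.2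
    · rw [balanced_nonneg G p hp hc, rk, if_pos hc, Zlam]
      omega
    · rw [balanced_neg G p hp (by omega), rk, if_neg hc, Zlam, Zlam]
      omega

def Stt (L : List ℕ) (d r : ℕ) (t : ℕ) (x q : ℤ) : Prop :=
  (∀ x' : ℤ, x < x' → x' ≤ d → VV L t (-x') = r + x') ∧ VV L t (-x) = q

theorem step_iff {d r : ℕ} {L : List ℕ} {B : ℤ × ℤ → ℕ} (G : Good d r L B) (t : ℕ)
    (ht : t < L.length) (x q : ℤ) (h1 : 1 ≤ x) (h2 : x ≤ d) (hq : 2 ≤ q)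
    (S : Stt L d r (t+1) x q) :
    ((L.getD t 0 : ℕ) + 1 : ℤ) = q ↔
      ∃ c, ((d : ℤ) + 1 - x, c) ∈ Diagram d (Zlam d r) ∧ B ((d : ℤ) + 1 - x, c) = t + 1 := by
  obtain ⟨S1, S2⟩ := S
  obtain ⟨A, B', hr, hA, hB, hAB, hAB'⟩ := reflOrder_VV L t
  obtain ⟨p, hp, hpt⟩ := G.surj t ht
  have hl := G.lab p hp
  rw [hpt, Nat.add_sub_cancel, hr] at hl
  have hf := fLabel_root d r p hp hl hAB hAB'
  have hs := yv_spec d r p hp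
  have hA' := VV_succ L t ht A
  have hB' := VV_succ L t ht B'
  rw [hA] at hA'
  rw [hB] at hB'
  have hpd := (mem_dia d r p).1 hp
  have hxn := VV_neg L (t+1) x
  constructor
  · intro ha
    have ha0 : L.getD t 0 ≠ 0 := by intro h; rw [h] at ha; simp at ha; omega
    rw [sB_pos _ ha0] at hA' hB'
    have hBx : B' = -x := by
      apply VV_inj L (t+1)
      rw [S2, hB']
      split_ifs <;> omega
    rcases hf with ⟨e1, e2⟩ | ⟨e1, e2⟩
    · exfalso
      have hx' := S1 A (by omega) (by omega)
      rw [VV_neg] at hx'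
      split_ifs at hA' <;> omega
    · refine ⟨p.2, ?_⟩
      have : ((d : ℤ) + 1 - x, p.2) = p := by
        ext <;> simp; omega
      rw [this]; exact ⟨hp, hpt⟩
  · rintro ⟨c, hc, hct⟩
    have hpe := G.inj p hp _ hc (hpt.trans hct.symm)
    have hp1 : p.1 = d + 1 - x := by rw [hpe]
    by_cases ha0 : L.getD t 0 = 0
    · exfalso
      rw [ha0, sB_zero] at hA' hB'
      rcases hf with ⟨e1, e2⟩ | ⟨e1, e2⟩
      · have : A = x := by omega
        rw [this] at hA'
        simp at hA'
        omega
      · have : B' = -x := by omega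
        rw [this] at hB'
        simp at hB'
        omega
    · rw [sB_pos _ ha0] at hA' hB'
      rcases hf with ⟨e1, e2⟩ | ⟨e1, e2⟩
      · have : A = x := by omega
        rw [this] at hA'
        split_ifs at hA' <;> omega
      · have : B' = -x := by omega
        rw [this] at hB'
        split_ifs at hB' <;> omega

theorem step_state {d r : ℕ} {L : List ℕ} (t : ℕ)
    (ht : t < L.length) (x q : ℤ) (hq : 2 ≤ q) (hq' : q ≤ r + x)
    (S : Stt L d r (t+1) x q) (ha : ((L.getD t 0 : ℕ) + 1 : ℤ) = q) :
    Stt L d r t x (q - 1) := by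
  have ha0 : L.getD t 0 ≠ 0 := by intro h; rw [h] at ha; simp at ha; omega
  obtain ⟨S1, S2⟩ := S
  constructor
  · intro x' h1 h2
    rw [VV_pred L t ht, S1 x' h1 h2, sB_pos _ ha0]
    split_ifs <;> omega
  · rw [VV_pred L t ht, S2, sB_pos _ ha0]
    split_ifs <;> omega

def PP (L : List ℕ) (d r T i m : ℕ) : Prop := ∀ j, j < m → L.getD (T - 1 - j) 0 = d + r - i - j

theorem phase_state {d r : ℕ} {L : List ℕ} (i T m : ℕ)
    (hi : 1 ≤ i) (hid : i ≤ d) (hm : m ≤ r + d - i) (hmT : m ≤ T) (hT : T ≤ L.length)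
    (S : Stt L d r T (d + 1 - i) (r + (d + 1 - i))) (P : PP L d r T i m) :
    Stt L d r (T - m) (d + 1 - i) (r + (d + 1 - i) - m) := by
  induction m with
  | zero => simpa using S
  | succ m ih =>
    have ih := ih (by omega) (by omega) (fun j hj => P j (by omega))
    have e : T - m = T - (m+1) + 1 := by omega
    rw [e] at ih
    have := step_state (T - (m+1)) (by omega) _ _ (by omega) (by omega) ih (by
      have := P m (by omega)
      rw [show T - 1 - m = T - (m+1) by omega] at this
      rw [this]; omega)
    convert this using 1
    push_cast; ring

theorem phase_iff {d r : ℕ} {L : List ℕ} {B : ℤ × ℤ → ℕ} (G : Good d r L B) (i T m : ℕ)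
    (hi : 1 ≤ i) (hid : i ≤ d) (hm : m ≤ r + d - i) (hmT : m ≤ T) (hT : T ≤ L.length)
    (S : Stt L d r T (d + 1 - i) (r + (d + 1 - i))) :
    PP L d r T i m ↔ ∀ k : ℕ, T - m + 1 ≤ k → k ≤ T →
      ∃ c : ℤ, ((i : ℤ), c) ∈ Diagram d (Zlam d r) ∧ B ((i : ℤ), c) = k := by
  induction m with
  | zero =>
    constructor
    · intro _ k h1 h2; omega
    · intro _ j hj; omega
  | succ m ih =>
    have ih := ih (by omega) (by omega)
    have hsplit : PP L d r T i (m+1) ↔ PP L d r T i m ∧ L.getD (T - 1 - m) 0 = d + r - i - m := by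
      constructor
      · intro h; exact ⟨fun j hj => h j (by omega), h m (by omega)⟩
      · rintro ⟨h1, h2⟩ j hj
        rcases Nat.lt_or_ge j m with h | h
        · exact h1 j h
        · have : j = m := by omega
          subst this; exact h2
    have key : PP L d r T i m → (L.getD (T - 1 - m) 0 = d + r - i - m ↔
        ∃ c : ℤ, ((i : ℤ), c) ∈ Diagram d (Zlam d r) ∧ B ((i : ℤ), c) = T - m) := by
      intro P
      have St := phase_state i T m hi hid (by omega) (by omega) hT S P
      have e : T - m = T - 1 - m + 1 := by omega
      rw [e] at St
      have := step_iff G (T - 1 - m) (by omega) _ _ (by omega) (by omega) (by omega) St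
      rw [show (d : ℤ) + 1 - (d + 1 - i) = i by ring] at this
      rw [e, ← this]
      omega
    rw [hsplit]
    constructor
    · rintro ⟨h1, h2⟩ k hk1 hk2
      rcases Nat.lt_or_ge k (T - m + 1) with h | h
      · have : k = T - m := by omega
        subst this
        exact (key h1).1 h2
      · exact ih.1 h1 k h hk2
    · intro h
      have h1 := ih.2 (fun k hk1 hk2 => h k (by omega) hk2)
      exact ⟨h1, (key h1).2 (h (T - m) (by omega) (by omega))⟩

theorem sigma_succ (d r : ℕ) (lam : ℕ → ℕ) (i : ℕ) :
    sigmaF d r lam (i + 1) = sigmaF d r lam i + muF d r lam (i + 1) := by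
  unfold sigmaF
  rw [Finset.sum_Icc_succ_top (by omega)]

theorem sigma_zero (d r : ℕ) (lam : ℕ → ℕ) : sigmaF d r lam 0 = 0 := by
  simp [sigmaF]

theorem sigma_mono (d r : ℕ) (lam : ℕ → ℕ) {i j : ℕ} (h : i ≤ j) :
    sigmaF d r lam i ≤ sigmaF d r lam j := by
  unfold sigmaF
  apply Finset.sum_le_sum_of_subset
  exact Finset.Icc_subset_Icc_right h

theorem size_sigma (d r : ℕ) (lam : ℕ → ℕ)
    (hsub : ∀ i : ℕ, 1 ≤ i → i ≤ d → lam i ≤ Zlam d r i) :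
    sizeP d (Zlam d r) = sizeP d lam + sigmaF d r lam d := by
  unfold sizeP sigmaF
  rw [← Finset.sum_add_distrib]
  apply Finset.sum_congr rfl
  intro i hi
  rw [Finset.mem_Icc] at hi
  have := hsub i hi.1 hi.2
  unfold Zlam at *
  unfold muF
  omega

theorem all_iff {d r : ℕ} {L : List ℕ} {B : ℤ × ℤ → ℕ} (G : Good d r L B) (lam : ℕ → ℕ) (N : ℕ)
    (hN : L.length = N + sigmaF d r lam d)
    (hmu : ∀ i, 1 ≤ i → i ≤ d → muF d r lam i ≤ r + d - i) (n : ℕ) (hn : n ≤ d) :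
    ((∀ i, d - n < i → i ≤ d → PP L d r (N + sigmaF d r lam i) i (muF d r lam i)) ↔
    (∀ i, d - n < i → i ≤ d → ∀ k : ℕ, N + sigmaF d r lam (i-1) + 1 ≤ k →
      k ≤ N + sigmaF d r lam i →
      ∃ c : ℤ, ((i : ℤ), c) ∈ Diagram d (Zlam d r) ∧ B ((i : ℤ), c) = k)) ∧
    ((∀ i, d - n < i → i ≤ d → PP L d r (N + sigmaF d r lam i) i (muF d r lam i)) → n < d →
      Stt L d r (N + sigmaF d r lam (d - n)) (n + 1) (r + (n + 1))) := by
  induction n with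
  | zero =>
    refine ⟨⟨fun _ i h1 h2 => by omega, fun _ i h1 h2 => by omega⟩, ?_⟩
    intro _ h
    rw [Nat.sub_zero, ← hN]
    constructor
    · intro x' h1 h2
      rw [VV_neg, G.fin x' (by push_cast at h1; omega) h2]; ring
    · rw [VV_neg, G.fin _ (by omega) (by omega)]; push_cast; ring
  | succ n ih =>
    obtain ⟨ih1, ih2⟩ := ih (by omega)
    obtain ⟨i, hi⟩ : ∃ i, d - n = i + 1 := ⟨d - n - 1, by omega⟩
    have hi' : d - (n+1) = i := by omega
    have hsig := sigma_succ d r lam i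
    have hle := sigma_mono d r lam (show i + 1 ≤ d by omega)
    rw [hi'] 
    rw [hi] at ih1 ih2
    have hmui := hmu (i+1) (by omega) (by omega)
    have hx : ((d : ℤ) + 1 - ((i + 1 : ℕ) : ℤ)) = (n : ℤ) + 1 := by omega
    have hT : N + sigmaF d r lam (i+1) - muF d r lam (i+1) = N + sigmaF d r lam i := by omega
    have hph := fun S => phase_iff G (i+1) (N + sigmaF d r lam (i+1)) (muF d r lam (i+1))
      (by omega) (by omega) hmui (by omega) (by omega) S
    have hps := fun S P => phase_state (L := L) (d := d) (r := r) (i+1) (N + sigmaF d r lam (i+1))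
      (muF d r lam (i+1)) (by omega) (by omega) hmui (by omega) (by omega) S P
    rw [hx, hT] at hph hps
    refine ⟨⟨?_, ?_⟩, ?_⟩
    · intro h j h1 h2
      have h' : ∀ i', i + 1 < i' → i' ≤ d →
        PP L d r (N + sigmaF d r lam i') i' (muF d r lam i') := fun i' a b => h i' (by omega) b
      rcases Nat.lt_or_ge (i+1) j with hj | hj
      · exact ih1.1 h' j hj h2
      · have : j = i + 1 := by omega
        subst this
        exact (hph (ih2 h' (by omega))).1 (h _ (by omega) h2)
    · intro h
      have h' := ih1.2 (fun i' a b => h i' (by omega) b)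
      intro j h1 h2
      rcases Nat.lt_or_ge (i+1) j with hj | hj
      · exact h' j hj h2
      · have : j = i + 1 := by omega
        subst this
        exact (hph (ih2 h' (by omega))).2 (h _ (by omega) h2)
    · intro h hnd
      have h' : ∀ i', i + 1 < i' → i' ≤ d →
        PP L d r (N + sigmaF d r lam i') i' (muF d r lam i') := fun i' a b => h i' (by omega) b
      have := hps (ih2 h' (by omega)) (h _ (by omega) (by omega))
      constructor
      · intro x' h1 h2
        exact this.1 x' (by push_cast at h1; omega) h2
      · have := this.1 ((n+1 : ℕ) + 1) (by push_cast; omega) (by omega)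
        exact this

theorem app_iff {a b c e : List ℕ} (h : a.length = c.length) :
    a ++ b = c ++ e ↔ a = c ∧ b = e :=
  ⟨fun H => List.append_inj H h, fun H => by rw [H.1, H.2]⟩

theorem aLam_take {d r : ℕ} (L : List ℕ) (lam : ℕ → ℕ) (N : ℕ)
    (hN : L.length = N + sigmaF d r lam d)
    (hmu : ∀ i, 1 ≤ i → i ≤ d → muF d r lam i ≤ r + d - i) (n : ℕ) (hn : n ≤ d) :
    ((L.drop N).take (sigmaF d r lam n) = (List.range n).flatMap fun k =>
    (List.range (muF d r lam (k + 1))).map fun t =>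
      d + r - (k + 1) - muF d r lam (k + 1) + 1 + t) ↔
    (∀ i, 0 < i → i ≤ n → PP L d r (N + sigmaF d r lam i) i (muF d r lam i)) := by
  induction n with
  | zero =>
    simp [sigma_zero]
    intro i h1 h2; omega
  | succ n ih =>
    have ih := ih (by omega)
    have hsig := sigma_succ d r lam n
    have hle := sigma_mono d r lam hn
    have hmun := hmu (n+1) (by omega) (by omega)
    have hlen : ((List.range n).flatMap fun k => (List.range (muF d r lam (k + 1))).map fun t =>
      d + r - (k + 1) - muF d r lam (k + 1) + 1 + t).length = sigmaF d r lam n := by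
      clear * -
      induction n with
      | zero => simp [sigma_zero]
      | succ n ih => rw [List.range_succ, List.flatMap_append, List.length_append, ih, sigma_succ]; simp
    rw [List.range_succ, List.flatMap_append, hsig, List.take_add,
      app_iff (by rw [hlen]; simp; omega), ih]
    have hseg : (List.take (muF d r lam (n+1)) (List.drop (sigmaF d r lam n) (L.drop N)) =
        List.flatMap (fun k => (List.range (muF d r lam (k + 1))).map fun t =>
        d + r - (k + 1) - muF d r lam (k + 1) + 1 + t) [n]) ↔
        PP L d r (N + sigmaF d r lam (n+1)) (n+1) (muF d r lam (n+1)) := by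
      rw [List.flatMap_singleton]
      constructor
      · intro h j hj
        have h2 := congrArg (fun l => l.getD (muF d r lam (n+1) - 1 - j) 0) h
        simp only [List.getD_eq_getElem?_getD] at h2 ⊢
        rw [List.getElem?_take_of_lt (by omega)] at h2
        simp only [List.getElem?_drop] at h2
        rw [show N + sigmaF d r lam (n+1) - 1 - j = N + (sigmaF d r lam n + (muF d r lam (n+1) - 1 - j)) by omega, h2]
        rw [List.getElem?_map, List.getElem?_range (by omega)]
        simp; omega
      · intro h
        apply List.ext_getElem
        · simp; omega
        · intro j h1 h2
          have hj : j < muF d r lam (n+1) := by simpa using h2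
          have := h (muF d r lam (n+1) - 1 - j) (by omega)
          rw [List.getD_eq_getElem _ _ (by omega)] at this
          simp only [List.getElem_take, List.getElem_drop, List.getElem_map, List.getElem_range]
          have e : N + (sigmaF d r lam n + j) = N + sigmaF d r lam (n + 1) - 1 - (muF d r lam (n + 1) - 1 - j) := by omega
          simp only [e]
          rw [this]; omega
    rw [hseg]
    constructor
    · rintro ⟨h1, h2⟩ i hi hi'
      rcases Nat.lt_or_ge n i with h | h
      · have : i = n + 1 := by omega
        subst this; exact h2
      · exact h1 i hi h
    · intro h
      exact ⟨fun i a b => h i a (by omega), h _ (by omega) le_rfl⟩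

theorem strict_lower (d : ℕ) (lam : ℕ → ℕ) (hlam : IsStrictPartition d lam) (n : ℕ) (hn : n < d) :
    n + 1 ≤ lam (d - n) := by
  induction n with
  | zero => simpa using hlam.2
  | succ n ih =>
    have h := hlam.1 (d - (n+1)) (by omega) (by omega)
    rw [show d - (n+1) + 1 = d - n by omega] at h
    have := ih (by omega)
    omega

/-- the balanced tableau `B_a` associated to a reduced word
`a ∈ Red(w^{(d,r)})` lies in `BS(Z(d,r))|_λ` if and only if the ending segment
`(a_{N+1}, …, a_ℓ)` equals `a^λ`. -/
theorem restricted_iff_ends_with_aLam (d r : ℕ) (hd : 1 ≤ d)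
    (lam : ℕ → ℕ) (hlam : IsStrictPartition d lam)
    (hsub : ∀ i : ℕ, 1 ≤ i → i ≤ d → lam i ≤ Zlam d r i)
    (w : Equiv.Perm ℤ) (hw : IsWdr d r w)
    (L : List ℕ) (hL : IsReducedWord (d + r) w L)
    (B : ℤ × ℤ → ℕ)
    (hB0 : ∀ p : ℤ × ℤ, p ∉ Diagram d (Zlam d r) → B p = 0)
    (hB : ∀ p ∈ Diagram d (Zlam d r),
      1 ≤ B p ∧ B p ≤ sizeP d (Zlam d r) ∧ reflOrder L (B p - 1) = fLabel d r p) :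
    B ∈ BSRestricted d r lam ↔ L.drop (sizeP d lam) = aLamWord d r lam := by
  have G := good_of d r w hw L hL B hB
  have hN : L.length = sizeP d lam + sigmaF d r lam d := by rw [G.len, size_sigma d r lam hsub]
  have hmu : ∀ i, 1 ≤ i → i ≤ d → muF d r lam i ≤ r + d - i := by
    intro i h1 h2
    have h := strict_lower d lam hlam (d - i) (by omega)
    rw [show d - (d - i) = i by omega] at h
    unfold muF
    omega
  have h1 := (all_iff G lam (sizeP d lam) hN hmu d le_rfl).1
  have h2 := aLam_take L lam (sizeP d lam) hN hmu d le_rfl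
  rw [List.take_of_length_le (by simp; omega)] at h2
  rw [Nat.sub_self] at h1
  unfold aLamWord
  rw [h2, h1]
  constructor
  · intro h i a b
    exact h.2 i a b
  · intro h
    exact ⟨G.balanced hB0, fun i a b => h i a b⟩

end BST
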